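/- arXiv:2512.21192 — 7 statements merged into one kernel-verified Lean document; each statement's English description precedes it below -/
import Mathlib

section
/- Let α* : ℕ → [0,1] be given by α*(k) := k(ū−c)^k / ((k−1)(ū−c)^k + ū^k) for k ≥ 1. Then: (i) for every strategy α : ℕ → [0,1] and every integer n ≥ 1, Reg(n, α, p̂) = R_n* where R_n* := (1 − ((ū−c)/ū)^n)(ū−c); and (ii) for every integer n ≥ 1 and every p ∈ [0,1], Reg(n, α*, p) ≤ R_n*. Consequently (α*, p̂) is a saddle point of the n-box regret problem with independently and identically distributed binary rewards, and the minimax regret equals R_n*. -/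
/-!
Write `r = 1 - p̂ = (ū - c) / ū` and `q = 1 - p`. If the regret with `n` boxes left is `R_n*`, then
opening with probability `a` when `n + 1` boxes are left gives a regret that differs from
`R_{n+1}*` by `ū (a (1 - r ^ (n + 1)) (q - r) - (1 - a) r (q ^ (n + 1) - r ^ (n + 1)))`.
This vanishes at `q = r` whatever `a` is, which gives (i). For `a ≤ 1` it is concave in `q ≥ 0`, so
it is nonpositive as soon as its derivative at `q = r` is zero. That first-order condition,
`(1 - a) (n + 1) r ^ (n + 1) = a (1 - r ^ (n + 1))`, is what determines `α*`; (ii) follows by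
induction on `n`.
-/

section Field

variable {K : Type*} [Field K] {u c : K}

/-- The right-hand side of the recursion for the expected ex-post regret: `n` boxes are left, the
next one is opened with probability `a`, and `R` is the further regret once it turns out empty.
The rewards are `u` with probability `p` and `0` otherwise, and opening costs `c`. -/
def regretStep (u c : K) (n : ℕ) (p a R : K) : K :=
  (1 - a) * (1 - (1 - p) ^ n) * (u - c) + a * (1 - p) * (c + R)

/-- The value `R_n*` of the regret problem with `n` boxes. -/
def minimaxRegret (u c : K) (n : ℕ) : K :=
  (1 - ((u - c) / u) ^ n) * (u - c)

/-- The minimax strategy `α*`: the probability of opening a box when `k` boxes are left. Its value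
at `k = 0` is immaterial. -/
def saddleStrategy (u c : K) (k : ℕ) : K :=
  k * (u - c) ^ k / ((k - 1) * (u - c) ^ k + u ^ k)

theorem minimaxRegret_zero (u c : K) : minimaxRegret u c 0 = 0 := by
  simp [minimaxRegret]

theorem regretStep_minimaxRegret (hu : u ≠ 0) (n : ℕ) (p a : K) :
    regretStep u c (n + 1) p a (minimaxRegret u c n) =
      minimaxRegret u c (n + 1) +
        u * (a * (1 - ((u - c) / u) ^ (n + 1)) * ((1 - p) - (u - c) / u) -
          (1 - a) * ((u - c) / u * ((1 - p) ^ (n + 1) - ((u - c) / u) ^ (n + 1)))) := by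
  obtain ⟨r, hr⟩ : ∃ r, (u - c) / u = r := ⟨_, rfl⟩
  obtain rfl : c = u - r * u := by rw [← hr, div_mul_cancel₀ _ hu, sub_sub_cancel]
  simp only [regretStep, minimaxRegret, hr]
  ring

theorem regretStep_minimaxRegret_div (hu : u ≠ 0) (n : ℕ) (a : K) :
    regretStep u c (n + 1) (c / u) a (minimaxRegret u c n) = minimaxRegret u c (n + 1) := by
  have hp : 1 - c / u = (u - c) / u := by rw [sub_div, div_self hu]
  rw [regretStep_minimaxRegret hu, hp]
  ring

theorem saddleStrategy_first_order (hu : u ≠ 0) {k : ℕ}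
    (hD : (k - 1) * (u - c) ^ k + u ^ k ≠ 0) :
    (1 - saddleStrategy u c k) * (k * ((u - c) / u) ^ k) =
      saddleStrategy u c k * (1 - ((u - c) / u) ^ k) := by
  have cleared : saddleStrategy u c k * ((k - 1) * (u - c) ^ k + u ^ k) = k * (u - c) ^ k :=
    div_mul_cancel₀ _ hD
  rw [div_pow]
  field_simp
  linear_combination -cleared

end Field

-- Bernoulli's inequality multiplied by `r`, the form that matches `regretStep_minimaxRegret`.
theorem natCast_mul_pow_mul_sub_le {R : Type*} [CommRing R] [LinearOrder R] [IsOrderedRing R]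
    {r q : R} (hr : 0 ≤ r) (hrq : 0 ≤ r + q) (k : ℕ) :
    k * r ^ k * (q - r) ≤ r * (q ^ k - r ^ k) := by
  obtain rfl | hk := eq_or_ne k 0
  · simp
  have bernoulli : k * r ^ (k - 1) * (q - r) ≤ q ^ k - r ^ k := by
    have := pow_add_mul_le_add_pow (b := q - r) hr (by linear_combination hrq) k
    rw [add_sub_cancel] at this
    exact le_sub_iff_add_le'.2 this
  calc
    k * r ^ k * (q - r) = r * (k * r ^ (k - 1) * (q - r)) := by
      rw [← mul_pow_sub_one hk r]
      ring
    _ ≤ r * (q ^ k - r ^ k) := by gcongr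

section LinearOrderedField

variable {K : Type*} [Field K] [LinearOrder K] [IsStrictOrderedRing K] {u c p a : K}

theorem regretStep_mono (ha : 0 ≤ a) (hp : p ≤ 1) (n : ℕ) : Monotone (regretStep u c n p a) := by
  intro R S hRS
  have : 0 ≤ 1 - p := sub_nonneg.2 hp
  unfold regretStep
  gcongr

theorem saddleStrategy_denom_pos (hcu : c ≤ u) (hu : 0 < u) {k : ℕ} (hk : 1 ≤ k) :
    0 < (k - 1) * (u - c) ^ k + u ^ k := by
  have : (0 : K) ≤ k - 1 := sub_nonneg.2 (Nat.one_le_cast.2 hk)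
  have : 0 ≤ u - c := sub_nonneg.2 hcu
  positivity

theorem saddleStrategy_nonneg (hcu : c ≤ u) (hu : 0 < u) {k : ℕ} (hk : 1 ≤ k) :
    0 ≤ saddleStrategy u c k :=
  div_nonneg (mul_nonneg k.cast_nonneg (pow_nonneg (sub_nonneg.2 hcu) k))
    (saddleStrategy_denom_pos hcu hu hk).le

theorem saddleStrategy_le_one (hc : 0 ≤ c) (hcu : c ≤ u) (hu : 0 < u) {k : ℕ} (hk : 1 ≤ k) :
    saddleStrategy u c k ≤ 1 := by
  rw [saddleStrategy, div_le_one (saddleStrategy_denom_pos hcu hu hk)]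
  have hpow : (u - c) ^ k ≤ u ^ k :=
    pow_le_pow_left₀ (sub_nonneg.2 hcu) (sub_le_self u hc) k
  linarith

theorem regretStep_saddleStrategy_le (hc : 0 ≤ c) (hcu : c ≤ u) (hu : 0 < u) (hp : p ≤ 1) (n : ℕ) :
    regretStep u c (n + 1) p (saddleStrategy u c (n + 1)) (minimaxRegret u c n) ≤
      minimaxRegret u c (n + 1) := by
  have hn : 1 ≤ n + 1 := n.succ_pos
  have first_order :=
    saddleStrategy_first_order hu.ne' (saddleStrategy_denom_pos hcu hu hn).ne'
  have ha : 0 ≤ 1 - saddleStrategy u c (n + 1) :=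
    sub_nonneg.2 (saddleStrategy_le_one hc hcu hu hn)
  have hr : 0 ≤ (u - c) / u := div_nonneg (sub_nonneg.2 hcu) hu.le
  have tangent := natCast_mul_pow_mul_sub_le hr (add_nonneg hr (sub_nonneg.2 hp)) (n + 1)
  rw [regretStep_minimaxRegret hu.ne', ← first_order, mul_assoc (1 - _), ← mul_sub]
  exact add_le_of_nonpos_right <| mul_nonpos_of_nonneg_of_nonpos hu.le <|
    mul_nonpos_of_nonneg_of_nonpos ha (sub_nonpos.2 tangent)

theorem indep_binary_saddle_point_general (hc : 0 ≤ c) (hcu : c ≤ u) (hu : 0 < u)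
    {Reg : ℕ → (ℕ → K) → K → K} (hReg0 : ∀ α p, Reg 0 α p = 0)
    (hRegS : ∀ n α p, Reg (n + 1) α p = regretStep u c (n + 1) p (α (n + 1)) (Reg n α p))
    {αstar : ℕ → K} (hαstar : ∀ k, 1 ≤ k → αstar k = saddleStrategy u c k) :
    (∀ α n, Reg n α (c / u) = minimaxRegret u c n) ∧
      ∀ n, ∀ p ≤ 1, Reg n αstar p ≤ minimaxRegret u c n := by
  refine ⟨fun α n => ?_, fun n p hp => ?_⟩
  · induction n with
    | zero => rw [hReg0, minimaxRegret_zero]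
    | succ n ih => rw [hRegS, ih, regretStep_minimaxRegret_div hu.ne']
  · induction n with
    | zero => rw [hReg0, minimaxRegret_zero]
    | succ n ih =>
      rw [hRegS, hαstar _ n.succ_pos]
      exact (regretStep_mono (saddleStrategy_nonneg hcu hu n.succ_pos) hp _ ih).trans
        (regretStep_saddleStrategy_le hc hcu hu hp n)

end LinearOrderedField

/-- `n`-box Pandora problem with i.i.d. binary rewards and ex-post regret
`Reg(n, α, p)` defined recursively by `Reg(0,α,p) = 0` and
`Reg(n,α,p) = (1-α(n))(1-(1-p)^n)(ū-c) + α(n)(1-p)(c + Reg(n-1,α,p))`.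
With `p̂ = c/ū` and `α*(k) = k(ū-c)^k/((k-1)(ū-c)^k + ū^k)`:
(i) `Reg(n, α, p̂) = R_n* := (1-((ū-c)/ū)^n)(ū-c)` for every strategy `α` and
every `n ≥ 1`; (ii) `Reg(n, α*, p) ≤ R_n*` for every `n ≥ 1` and `p ∈ [0,1]`.
So `(α*, p̂)` is a saddle point with minimax regret `R_n*`. -/
theorem indep_binary_saddle_point (ubar c : ℝ) (hc : 0 < c) (hcu : c < ubar)
    (Reg : ℕ → (ℕ → ℝ) → ℝ → ℝ)
    (hReg0 : ∀ (α : ℕ → ℝ) (p : ℝ), Reg 0 α p = 0)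
    (hRegS : ∀ (n : ℕ) (α : ℕ → ℝ) (p : ℝ),
      Reg (n + 1) α p =
        (1 - α (n + 1)) * (1 - (1 - p) ^ (n + 1)) * (ubar - c)
          + α (n + 1) * (1 - p) * (c + Reg n α p))
    (αstar : ℕ → ℝ)
    (hαstar : ∀ k : ℕ, 1 ≤ k →
      αstar k = (k : ℝ) * (ubar - c) ^ k / (((k : ℝ) - 1) * (ubar - c) ^ k + ubar ^ k)) :
    (∀ α : ℕ → ℝ, (∀ k, α k ∈ Set.Icc (0:ℝ) 1) → ∀ n : ℕ, 1 ≤ n →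
      Reg n α (c / ubar) = (1 - ((ubar - c) / ubar) ^ n) * (ubar - c)) ∧
    (∀ n : ℕ, 1 ≤ n → ∀ p ∈ Set.Icc (0:ℝ) 1,
      Reg n αstar p ≤ (1 - ((ubar - c) / ubar) ^ n) * (ubar - c)) := by
  have ⟨eq, le⟩ :=
    indep_binary_saddle_point_general hc.le hcu.le (hc.trans hcu) hReg0 hRegS hαstar
  exact ⟨fun α _ n _ => eq α n, fun n _ p hp => le n p hp.2⟩
end

section
/- The sequence α_n* := n(ū−c)^n / ((n−1)(ū−c)^n + ū^n), defined for integers n ≥ 1, is strictly decreasing in n and converges to 0 as n → ∞. -/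
/-!
Put `x = ū / (ū - c) > 1`. Dividing numerator and denominator by `n * (ū - c) ^ n` gives
`1 / α_n* = 1 + (x ^ n - 1) / n`. Up to the positive factor `x - 1`, the quotient `(x ^ n - 1) / n`
is the mean of the first `n` terms `1, x, …, x ^ (n - 1)` of an increasing sequence, so it increases
with `n`; it tends to infinity because exponentials outgrow linear functions.
-/

open Filter Finset

section OrderedField

variable {K : Type*} [Field K] [LinearOrder K] [IsStrictOrderedRing K]

lemma strictMonoOn_sum_range_div {f : ℕ → K} (hf : StrictMono f) :
    StrictMonoOn (fun n : ℕ => (∑ i ∈ range n, f i) / n) (Set.Ici 1) := by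
  refine strictMonoOn_of_lt_add_one Set.ordConnected_Ici fun n _ (hn : 1 ≤ n) _ => ?_
  have hsum : ∑ i ∈ range n, f i < n * f n := by
    simpa using sum_lt_sum_of_nonempty (nonempty_range_iff.2 (by lia))
      fun i hi => hf (mem_range.1 hi)
  have hn' : (0 : K) < n := by exact_mod_cast hn
  rw [div_lt_div_iff₀ hn' (by positivity), sum_range_succ]
  push_cast
  linear_combination hsum

lemma strictMonoOn_pow_sub_one_div {x : K} (hx : 1 < x) :
    StrictMonoOn (fun n : ℕ => (x ^ n - 1) / n) (Set.Ici 1) := by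
  have hmean : StrictMonoOn (fun n : ℕ => (x - 1) * ((∑ i ∈ range n, x ^ i) / n)) (Set.Ici 1) :=
    (strictMono_mul_left_of_pos (sub_pos.2 hx)).comp_strictMonoOn
      (strictMonoOn_sum_range_div (pow_right_strictMono₀ hx))
  simpa only [← mul_div_assoc, mul_geom_sum] using hmean

end OrderedField

lemma tendsto_pow_sub_one_div_atTop {x : ℝ} (hx : 1 < x) :
    Tendsto (fun n : ℕ => (x ^ n - 1) / n) atTop atTop := by
  have hzero : Tendsto (fun n : ℕ => n / x ^ n) atTop (nhds 0) := by
    simpa only [pow_one] using tendsto_pow_const_div_const_pow_of_one_lt 1 hx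
  have hpos : ∀ᶠ n : ℕ in atTop, 0 < n / x ^ n := by
    filter_upwards [eventually_gt_atTop 0] with n hn
    positivity
  have hpow : Tendsto (fun n : ℕ => x ^ n / n) atTop atTop := by
    simpa only [Pi.inv_def, inv_div] using
      (tendsto_nhdsWithin_of_tendsto_nhds_of_eventually_within _ hzero hpos).inv_tendsto_nhdsGT_zero
  simpa only [sub_div, ← sub_eq_add_neg] using
    hpow.atTop_add tendsto_one_div_atTop_nhds_zero_nat.neg

lemma mul_pow_div_sub_one_mul_pow_add_pow {K : Type*} [Field K] {a : K} (b : K) {n : ℕ}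
    (ha : a ≠ 0) (hn : (n : K) ≠ 0) :
    n * a ^ n / ((n - 1) * a ^ n + b ^ n) = (1 + ((b / a) ^ n - 1) / n)⁻¹ := by
  have hden : (n - 1) * a ^ n + b ^ n = n * a ^ n * (1 + ((b / a) ^ n - 1) / n) := by
    rw [div_pow]
    field_simp
    ring
  rw [hden, div_mul_cancel_left₀ (mul_ne_zero hn (pow_ne_zero n ha))]

/-- The regret-minimizing search probabilities
`α_n* = n(ū-c)^n / ((n-1)(ū-c)^n + ū^n)` (for `n ≥ 1`) are strictly
decreasing in `n` and converge to `0` as `n → ∞`. -/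
theorem alphaStar_strictAnti_tendsto_zero (ubar c : ℝ) (hc : 0 < c) (hcu : c < ubar) :
    StrictAntiOn
      (fun n : ℕ => (n : ℝ) * (ubar - c) ^ n / (((n : ℝ) - 1) * (ubar - c) ^ n + ubar ^ n))
      {n : ℕ | 1 ≤ n} ∧
    Filter.Tendsto
      (fun n : ℕ => (n : ℝ) * (ubar - c) ^ n / (((n : ℝ) - 1) * (ubar - c) ^ n + ubar ^ n))
      Filter.atTop (nhds 0) := by
  have ha : 0 < ubar - c := sub_pos.2 hcu
  have hx : 1 < ubar / (ubar - c) := (one_lt_div ha).2 (sub_lt_self ubar hc)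
  have hα : Set.EqOn (fun n : ℕ => (1 + ((ubar / (ubar - c)) ^ n - 1) / n)⁻¹)
      (fun n : ℕ => (n : ℝ) * (ubar - c) ^ n / (((n : ℝ) - 1) * (ubar - c) ^ n + ubar ^ n))
      {n : ℕ | 1 ≤ n} := fun n (hn : 1 ≤ n) =>
    (mul_pow_div_sub_one_mul_pow_add_pow ubar ha.ne' (Nat.cast_ne_zero.2 (by lia))).symm
  refine ⟨StrictAntiOn.congr (fun m hm n hn hmn => ?_) hα,
    Tendsto.congr' ((eventually_ge_atTop 1).mono hα) ?_⟩
  · have hpow : 0 ≤ (ubar / (ubar - c)) ^ m - 1 := sub_nonneg.2 (one_le_pow₀ hx.le)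
    exact inv_strictAnti₀ (by positivity)
      (add_lt_add_right (strictMonoOn_pow_sub_one_div hx hm hn hmn) 1)
  · exact (tendsto_atTop_add_const_left _ 1 (tendsto_pow_sub_one_div_atTop hx)).inv_tendsto_atTop
end

section
/- For every q ∈ [0,1] and every integer n ≥ 2: if S(q,n) ≤ S(q,n−1), then S(q,n+1) < S(q,n). Consequently the sequence n ↦ S(q,n) is quasi-concave: once it weakly decreases at some step, it strictly decreases at every later step. -/
/-- The regret-minimizing probability of opening another box when `k` boxes remain. -/
noncomputable def alphaStar (ubar c : ℝ) (k : ℕ) : ℝ :=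
  (k : ℝ) * (ubar - c) ^ k / (((k : ℝ) - 1) * (ubar - c) ^ k + ubar ^ k)

/-- Expected number of boxes opened under the regret-minimizing search rule when
the true data-generating process is i.i.d. with success probability `q`:
`S(q,n) = Σ_{i=1}^n (1-q)^{n-i} ∏_{j=i}^n α_j*`. -/
noncomputable def expSearch (ubar c q : ℝ) (n : ℕ) : ℝ :=
  ∑ i ∈ Finset.Icc 1 n, (1 - q) ^ (n - i) * ∏ j ∈ Finset.Icc i n, alphaStar ubar c j

/-! Inverting `α_k* = k(ū-c)^k / ((k-1)(ū-c)^k + ū^k)` gives `1/α_k* = 1 + (r^k - 1)/k` with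
`r = ū/(ū-c)`. The last term is the slope of a chord from `0` of the strictly convex function
`t ↦ r^t`, so it increases with `k` and `α_k*` decreases. On the other hand
`S(q,n+1) = α_{n+1}* (1 + (1-q) S(q,n))`. If `S(q,n+1) ≤ S(q,n)`, replacing `S(q,n)` by `S(q,n+1)`
in the bracket does not increase it, while replacing `α_{n+1}*` by `α_{n+2}*` strictly decreases
the product, whence `S(q,n+2) < S(q,n+1)`. -/

theorem succ_mul_pow_lt_mul_pow_succ_add_one {R : Type*} [CommRing R] [LinearOrder R]
    [IsStrictOrderedRing R] {x : R} (hx : 0 < x) (hx₁ : x ≠ 1) {n : ℕ} (hn : 1 ≤ n) :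
    (n + 1) * x ^ n < n * x ^ (n + 1) + 1 := by
  have hsq : 0 < (x - 1) ^ 2 := pow_two_pos_of_ne_zero (sub_ne_zero.2 hx₁)
  induction n, hn using Nat.le_induction with
  | base => push_cast; linear_combination hsq
  | succ n _ ih =>
    have increment_pos : 0 < (n + 1) * x ^ n * (x - 1) ^ 2 := by positivity
    push_cast
    linear_combination ih + increment_pos

theorem pow_sub_one_div_lt_pow_succ_sub_one_div {K : Type*} [Field K] [LinearOrder K]
    [IsStrictOrderedRing K] {x : K} (hx : 0 < x) (hx₁ : x ≠ 1) {n : ℕ} (hn : 1 ≤ n) :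
    (x ^ n - 1) / n < (x ^ (n + 1) - 1) / (n + 1) := by
  rw [div_lt_div_iff₀ (by positivity) (by positivity)]
  linear_combination succ_mul_pow_lt_mul_pow_succ_add_one hx hx₁ hn

theorem succ_lt_of_recurrence_of_succ_le {α : Type*} [Preorder α] {f : ℕ → α → α} {s : ℕ → α}
    (hs : ∀ n, s (n + 1) = f n (s n)) (hf : ∀ n, Monotone (f n))
    (hlt : ∀ n, f (n + 1) (s (n + 1)) < f n (s (n + 1)))
    {m n : ℕ} (hmn : m ≤ n) (hm : s (m + 1) ≤ s m) : s (n + 2) < s (n + 1) := by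
  have step (k : ℕ) (hk : s (k + 1) ≤ s k) : s (k + 2) < s (k + 1) :=
    calc s (k + 2) = f (k + 1) (s (k + 1)) := hs (k + 1)
      _ < f k (s (k + 1)) := hlt k
      _ ≤ f k (s k) := hf k hk
      _ = s (k + 1) := (hs k).symm
  induction n, hmn using Nat.le_induction with
  | base => exact step m hm
  | succ n _ ih => exact step (n + 1) ih.le

section AlphaStar

variable {ubar c : ℝ} {k : ℕ}

theorem alphaStar_pos (hu : 0 < ubar) (hcu : c < ubar) (hk : 1 ≤ k) :
    0 < alphaStar ubar c k := by
  have : 0 < ubar - c := sub_pos.2 hcu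
  have : (0 : ℝ) ≤ k - 1 := sub_nonneg.2 (mod_cast hk)
  unfold alphaStar
  positivity

theorem inv_alphaStar (hcu : c ≠ ubar) (hk : k ≠ 0) :
    (alphaStar ubar c k)⁻¹ = 1 + ((ubar / (ubar - c)) ^ k - 1) / k := by
  have : ubar - c ≠ 0 := sub_ne_zero.2 hcu.symm
  rw [alphaStar, inv_div, div_pow]
  field_simp
  ring

theorem alphaStar_succ_lt (hu : 0 < ubar) (hc : c ≠ 0) (hcu : c < ubar) (hk : 1 ≤ k) :
    alphaStar ubar c (k + 1) < alphaStar ubar c k := by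
  have ha : 0 < ubar - c := sub_pos.2 hcu
  have ratio_ne_one : ubar / (ubar - c) ≠ 1 := by
    rwa [Ne, div_eq_one_iff_eq ha.ne', eq_comm, sub_eq_self]
  rw [← inv_lt_inv₀ (alphaStar_pos hu hcu hk) (alphaStar_pos hu hcu k.succ_pos),
    inv_alphaStar hcu.ne (Nat.one_le_iff_ne_zero.1 hk), inv_alphaStar hcu.ne k.succ_ne_zero,
    Nat.cast_succ]
  gcongr 1 + ?_
  exact pow_sub_one_div_lt_pow_succ_sub_one_div (div_pos hu ha) ratio_ne_one hk

end AlphaStar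

section ExpSearch

theorem expSearch_succ (ubar c q : ℝ) (n : ℕ) :
    expSearch ubar c q (n + 1) =
      alphaStar ubar c (n + 1) * (1 + (1 - q) * expSearch ubar c q n) := by
  have extend_term (i : ℕ) (hi : i ∈ Finset.Icc 1 n) :
      (1 - q) ^ (n + 1 - i) * ∏ j ∈ Finset.Icc i (n + 1), alphaStar ubar c j =
        alphaStar ubar c (n + 1) * (1 - q) *
          ((1 - q) ^ (n - i) * ∏ j ∈ Finset.Icc i n, alphaStar ubar c j) := by
    have hin : i ≤ n := (Finset.mem_Icc.1 hi).2
    rw [Finset.prod_Icc_succ_top (by lia), Nat.succ_sub hin, pow_succ]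
    ring
  rw [expSearch, expSearch, Finset.sum_Icc_succ_top (by lia), Finset.sum_congr rfl extend_term,
    ← Finset.mul_sum, Nat.sub_self, pow_zero, Finset.Icc_self, Finset.prod_singleton]
  ring

variable {ubar c q : ℝ}

theorem expSearch_nonneg (hu : 0 < ubar) (hcu : c < ubar) (hq : q ≤ 1) (n : ℕ) :
    0 ≤ expSearch ubar c q n := by
  have hp : 0 ≤ 1 - q := sub_nonneg.2 hq
  refine Finset.sum_nonneg fun i hi ↦ mul_nonneg (pow_nonneg hp _) ?_
  refine Finset.prod_nonneg fun j hj ↦ (alphaStar_pos hu hcu ?_).le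
  exact (Finset.mem_Icc.1 hi).1.trans (Finset.mem_Icc.1 hj).1

theorem expSearch_quasiConcave_general (hu : 0 < ubar) (hc : c ≠ 0) (hcu : c < ubar) (hq : q ≤ 1)
    {m n : ℕ} (hm : 1 ≤ m) (hmn : m ≤ n)
    (h : expSearch ubar c q m ≤ expSearch ubar c q (m - 1)) :
    expSearch ubar c q (n + 1) < expSearch ubar c q n := by
  obtain ⟨m, rfl⟩ := Nat.exists_eq_add_of_le' hm
  obtain ⟨n, rfl⟩ := Nat.exists_eq_add_of_le' (hm.trans hmn)
  have : 0 ≤ 1 - q := sub_nonneg.2 hq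
  have recurrence_mono (k : ℕ) :
      Monotone fun S ↦ alphaStar ubar c (k + 1) * (1 + (1 - q) * S) := by
    have := alphaStar_pos hu hcu k.succ_pos
    intro x y hxy
    dsimp only
    gcongr
  refine succ_lt_of_recurrence_of_succ_le (expSearch_succ ubar c q) recurrence_mono (fun k ↦ ?_)
    (Nat.le_of_succ_le_succ hmn) h
  have bracket_pos : 0 < 1 + (1 - q) * expSearch ubar c q (k + 1) := by
    have := expSearch_nonneg hu hcu hq (k + 1)
    positivity
  exact mul_lt_mul_of_pos_right (alphaStar_succ_lt hu hc hcu k.succ_pos) bracket_pos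

end ExpSearch

/-- For every `q ∈ [0,1]` and `n ≥ 2`: if `S(q,n) ≤ S(q,n-1)` then
`S(q,n+1) < S(q,n)`; consequently `n ↦ S(q,n)` is quasi-concave — once it
weakly decreases at some step, it strictly decreases at every later step. -/
theorem expSearch_quasiConcave (ubar c : ℝ) (hc : 0 < c) (hcu : c < ubar)
    (q : ℝ) (hq : q ∈ Set.Icc (0:ℝ) 1) :
    (∀ n : ℕ, 2 ≤ n → expSearch ubar c q n ≤ expSearch ubar c q (n - 1) →
      expSearch ubar c q (n + 1) < expSearch ubar c q n) ∧
    (∀ m n : ℕ, 2 ≤ m → m ≤ n →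
      expSearch ubar c q m ≤ expSearch ubar c q (m - 1) →
      expSearch ubar c q (n + 1) < expSearch ubar c q n) := by
  have hu : 0 < ubar := hc.trans hcu
  exact ⟨fun n hn ↦ expSearch_quasiConcave_general hu hc.ne' hcu hq.2 (by lia) le_rfl,
    fun m n hm ↦ expSearch_quasiConcave_general hu hc.ne' hcu hq.2 (by lia)⟩
end

section
/- Let n ≥ 1 be an integer and let q_1 ≥ q_2 ≥ … ≥ q_n ≥ 0 be real numbers with Σ_{k=1}^n q_k ≤ 1; set q̄ := (Σ_{k=1}^n q_k)/n. Then for every m ∈ {0,1,…,n}: Σ_{k=1}^m q_k(k−1)c + Σ_{k=m+1}^n q_k(ū−c+mc) + (1−Σ_{k=1}^n q_k)·mc ≤ Σ_{k=1}^m q̄(k−1)c + Σ_{k=m+1}^n q̄(ū−c+mc) + (1−n·q̄)·mc. That is, the decision-maker's expected ex-post regret from stopping after m unsuccessful openings is maximized, over all nonincreasing first-success profiles with the same total success probability, by the constant profile q_1 = … = q_n = q̄. -/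
/-!
Conditionally on the box `k` that holds the first success, the regret from stopping after `m`
openings is nondecreasing in `k`: finding the reward later wastes more search, and missing it is
worse still. A nonincreasing profile `q` is oppositely ordered to this regret, so Chebyshev's sum
inequality says that replacing `q` by its average can only raise the expectation. The regret in
the event of no success depends on `q` only through its total mass, which averaging preserves.
-/

open Finset

theorem sum_mul_le_mul_sum_of_antivaryOn {ι R : Type*} [Semiring R] [LinearOrder R]
    [IsStrictOrderedRing R] [ExistsAddOfLE R] {s : Finset ι} {f g : ι → R} {a : R}
    (hfg : AntivaryOn f g s) (ha : #s * a = ∑ i ∈ s, f i) :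
    ∑ i ∈ s, f i * g i ≤ a * ∑ i ∈ s, g i := by
  obtain rfl | hs := s.eq_empty_or_nonempty
  · simp
  · have hcard : (0 : R) < #s := by exact_mod_cast hs.card_pos
    refine le_of_mul_le_mul_left ?_ hcard
    rw [← mul_assoc, ha]
    exact hfg.card_mul_sum_le_sum_mul_sum

theorem sum_Icc_ite_le {M : Type*} [AddCommMonoid M] {a m n : ℕ} (ham : a ≤ m + 1) (hmn : m ≤ n)
    (f g : ℕ → M) :
    ∑ k ∈ Icc a n, (if k ≤ m then f k else g k) =
      ∑ k ∈ Icc a m, f k + ∑ k ∈ Icc (m + 1) n, g k := by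
  have hle : {k ∈ Icc a n | k ≤ m} = Icc a m := by grind
  have hgt : {k ∈ Icc a n | ¬ k ≤ m} = Icc (m + 1) n := by grind
  rw [sum_ite, hle, hgt]

section Regret

variable {R : Type*} [CommRing R]

/-- The ex-post regret from stopping after at most `m` openings when the reward `ubar` is first
found in the `k`-th box opened, at cost `c` per box. For `k ≤ m` the success is reached after
`k - 1` wasted openings; for `k > m` the net reward `ubar - c` is forgone and `m` openings are
wasted. Boxes are numbered from `1`. -/
def exPostRegret (ubar c : R) (m k : ℕ) : R :=
  if k ≤ m then ((k : R) - 1) * c else ubar - c + m * c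

/-- The expected ex-post regret from stopping after at most `m` openings, where `q k` is the
probability that the first success occurs at box `k ∈ {1, …, n}`; with the remaining probability
there is no success and all `m` openings are wasted. -/
def expectedRegret (ubar c : R) (n : ℕ) (q : ℕ → R) (m : ℕ) : R :=
  ∑ k ∈ Icc 1 n, q k * exPostRegret ubar c m k + (1 - ∑ k ∈ Icc 1 n, q k) * (m * c)

theorem expectedRegret_eq_of_le (ubar c : R) {n m : ℕ} (hm : m ≤ n) (q : ℕ → R) :
    expectedRegret ubar c n q m =
      ∑ k ∈ Icc 1 m, q k * ((k : R) - 1) * c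
        + ∑ k ∈ Icc (m + 1) n, q k * (ubar - c + m * c)
        + (1 - ∑ k ∈ Icc 1 n, q k) * (m * c) := by
  simp only [expectedRegret, exPostRegret, mul_ite, ← mul_assoc (q _)]
  rw [sum_Icc_ite_le (Nat.le_add_left 1 m) hm]

variable [LinearOrder R] [IsStrictOrderedRing R]

theorem exPostRegret_monotone {ubar c : R} (hubar : 0 ≤ ubar) (hc : 0 ≤ c) (m : ℕ) :
    Monotone (exPostRegret ubar c m) := by
  have hwaste : Monotone fun k : ℕ ↦ ((k : R) - 1) * c := fun k l hkl ↦ by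
    dsimp only
    gcongr
  have hmissed {k : ℕ} (hk : k ≤ m) : ((k : R) - 1) * c ≤ ubar - c + m * c := calc
    ((k : R) - 1) * c ≤ ((m : R) - 1) * c := hwaste hk
    _ ≤ ubar + ((m : R) - 1) * c := le_add_of_nonneg_left hubar
    _ = ubar - c + m * c := by ring
  intro k l hkl
  unfold exPostRegret
  split_ifs with hk hl hl
  · exact hwaste hkl
  · exact hmissed hk
  · exact absurd (hkl.trans hl) hk
  · exact le_rfl

theorem flattening_maximizes_regret_general {ubar c : R} (hubar : 0 ≤ ubar) (hc : 0 ≤ c) {n : ℕ}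
    {q : ℕ → R} (hq : AntitoneOn q (Set.Icc 1 n)) {qbar : R}
    (hqbar : n * qbar = ∑ k ∈ Icc 1 n, q k) (m : ℕ) :
    expectedRegret ubar c n q m ≤ expectedRegret ubar c n (fun _ ↦ qbar) m := by
  have hopposite : AntivaryOn q (exPostRegret ubar c m) (Icc 1 n : Finset ℕ) := by
    rw [coe_Icc]
    exact hq.antivaryOn ((exPostRegret_monotone hubar hc m).monotoneOn _)
  have hmass : ∑ _k ∈ Icc 1 n, qbar = ∑ k ∈ Icc 1 n, q k := by simpa using hqbar
  have hchebyshev := sum_mul_le_mul_sum_of_antivaryOn hopposite (by simpa using hqbar)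
  rw [expectedRegret, expectedRegret, hmass, ← mul_sum]
  gcongr

end Regret

/-- The decision-maker's expected ex-post regret from stopping after `m`
unsuccessful openings,
`Σ_{k=1}^m q_k(k-1)c + Σ_{k=m+1}^n q_k(ū-c+mc) + (1-Σ_{k=1}^n q_k)mc`,
is maximized over all nonincreasing first-success profiles with the same total
success probability by the constant profile `q_1 = … = q_n = q̄`. -/
theorem flattening_maximizes_regret (ubar c : ℝ) (hc : 0 < c) (hcu : c < ubar)
    (n : ℕ) (hn : 1 ≤ n) (q : ℕ → ℝ)
    (hmono : ∀ k l : ℕ, 1 ≤ k → k ≤ l → l ≤ n → q l ≤ q k)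
    (hnonneg : ∀ k : ℕ, 1 ≤ k → k ≤ n → 0 ≤ q k)
    (hsum : (∑ k ∈ Finset.Icc 1 n, q k) ≤ 1)
    (qbar : ℝ) (hqbar : qbar = (∑ k ∈ Finset.Icc 1 n, q k) / n) :
    ∀ m : ℕ, m ≤ n →
      (∑ k ∈ Finset.Icc 1 m, q k * ((k : ℝ) - 1) * c)
        + (∑ k ∈ Finset.Icc (m + 1) n, q k * (ubar - c + (m : ℝ) * c))
        + (1 - ∑ k ∈ Finset.Icc 1 n, q k) * ((m : ℝ) * c)
      ≤ (∑ k ∈ Finset.Icc 1 m, qbar * ((k : ℝ) - 1) * c)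
        + (∑ k ∈ Finset.Icc (m + 1) n, qbar * (ubar - c + (m : ℝ) * c))
        + (1 - (n : ℝ) * qbar) * ((m : ℝ) * c) := by
  intro m hm
  have htotal : n * qbar = ∑ k ∈ Icc 1 n, q k := by
    rw [hqbar, mul_div_cancel₀ _ (by positivity)]
  have hregret := flattening_maximizes_regret_general (hc.trans hcu).le hc.le
    (fun _ hk _ hl hkl ↦ hmono _ _ hk.1 hkl hl.2) htotal m
  simpa only [expectedRegret_eq_of_le ubar c hm, sum_const, Nat.card_Icc, Nat.add_sub_cancel,
    nsmul_eq_mul] using hregret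
end

section
/- Fix an integer n ≥ 1 and define R^c_n(α, P) := (1−α)·P·(ū−c) + α·(P·(n−1)/2 + (1−P)·n)·c, α_n^c := (ū−c)/(ū−c + (n+1)c/2), P_n^* := n·c/(ū + (n−1)c/2), and R_n^{c*} := n·c·(ū−c)/(ū−c + (n+1)c/2). Then: (i) R^c_n(α_n^c, P) = R_n^{c*} for every P ∈ [0,1]; (ii) R^c_n(α, P_n^*) = R_n^{c*} for every α ∈ [0,1]; and (iii) P_n^* ≤ 1 if and only if n ≤ (2ū−c)/c. In particular, for n ≤ (2ū−c)/c the pair (α_n^c, P_n^*) is a saddle point of R^c_n with value R_n^{c*}. -/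
/-!
The regret is affine in each of the two probabilities and vanishes when both are `0`, so it has
the form `a * P + b * α - d * α * P`. Completing the product turns this into
`a * b / d - d * (α - a / d) * (P - b / d)`: at `α = a / d` it no longer depends on `P`, at
`P = b / d` it no longer depends on `α`, and in both cases the value is `a * b / d`.
-/

section Regret

variable {K : Type*} [Field K]

/-- Expected ex-post regret `R^c_n(α, P)` in the needle-in-the-haystack problem with treasure `u`,
search cost `c` and `n` boxes. The number of boxes is an element of the field, as only its
arithmetic matters. -/
def searchRegret (u c n α P : K) : K :=
  (1 - α) * P * (u - c) + α * (P * (n - 1) / 2 + (1 - P) * n) * c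

/-- Minus the coefficient of `α * P` in `searchRegret u c n α P`: how much an existing treasure
lowers the regret of searching relative to that of opting out. -/
def regretCoupling (u c n : K) : K :=
  u - c + (n + 1) * c / 2

/-- The probability `α_n^c` of searching at which the regret is the same for all `P`. -/
def equalizingSearchProb (u c n : K) : K :=
  (u - c) / regretCoupling u c n

/-- The probability `P_n^*` of a treasure at which the regret is the same for all `α`. The
denominator is the paper's; it equals `regretCoupling u c n`. -/
def equalizingTreasureProb (u c n : K) : K :=
  n * c / (u + (n - 1) * c / 2)

/-- The value `R_n^{c*}` of the regret at the pair of equalizing probabilities. -/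
def equalizedRegret (u c n : K) : K :=
  n * c * (u - c) / regretCoupling u c n

lemma mul_add_mul_sub_mul_mul_eq (a b x y : K) {d : K} (hd : d ≠ 0) :
    a * y + b * x - d * x * y = b * a / d - d * (x - a / d) * (y - b / d) := by
  field_simp
  ring

variable [NeZero (2 : K)]

lemma regretCoupling_eq_add (u c n : K) :
    regretCoupling u c n = u + (n - 1) * c / 2 := by
  unfold regretCoupling
  field_simp
  ring

lemma equalizingTreasureProb_eq_div_regretCoupling (u c n : K) :
    equalizingTreasureProb u c n = n * c / regretCoupling u c n := by
  rw [equalizingTreasureProb, regretCoupling_eq_add]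

lemma searchRegret_eq_bilinear (u c n α P : K) :
    searchRegret u c n α P = (u - c) * P + n * c * α - regretCoupling u c n * α * P := by
  unfold searchRegret regretCoupling
  field_simp
  ring

lemma searchRegret_eq_equalizedRegret_sub {u c n : K} (hd : regretCoupling u c n ≠ 0) (α P : K) :
    searchRegret u c n α P = equalizedRegret u c n -
      regretCoupling u c n * (α - equalizingSearchProb u c n) *
        (P - equalizingTreasureProb u c n) := by
  rw [searchRegret_eq_bilinear, mul_add_mul_sub_mul_mul_eq _ _ _ _ hd,
    equalizingTreasureProb_eq_div_regretCoupling, equalizingSearchProb, equalizedRegret]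

lemma searchRegret_equalizingSearchProb {u c n : K} (hd : regretCoupling u c n ≠ 0) (P : K) :
    searchRegret u c n (equalizingSearchProb u c n) P = equalizedRegret u c n := by
  rw [searchRegret_eq_equalizedRegret_sub hd, sub_self, mul_zero, zero_mul, sub_zero]

lemma searchRegret_equalizingTreasureProb {u c n : K} (hd : regretCoupling u c n ≠ 0) (α : K) :
    searchRegret u c n α (equalizingTreasureProb u c n) = equalizedRegret u c n := by
  rw [searchRegret_eq_equalizedRegret_sub hd, sub_self, mul_zero, sub_zero]

end Regret

section Order

variable {K : Type*} [Field K] [LinearOrder K] [IsStrictOrderedRing K] {u c n : K}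

lemma regretCoupling_pos (hc : 0 < c) (hcu : c < u) (hn : 0 ≤ n) : 0 < regretCoupling u c n :=
  add_pos (sub_pos.mpr hcu) (by positivity)

lemma equalizingTreasureProb_le_one_iff (hc : 0 < c) (hd : 0 < regretCoupling u c n) :
    equalizingTreasureProb u c n ≤ 1 ↔ n ≤ (2 * u - c) / c := by
  calc equalizingTreasureProb u c n ≤ 1
      ↔ n * c ≤ regretCoupling u c n := by
        rw [equalizingTreasureProb_eq_div_regretCoupling, div_le_one hd]
    _ ↔ n * c ≤ 2 * u - c := by
        rw [regretCoupling]
        constructor <;> intro h <;> linarith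
    _ ↔ n ≤ (2 * u - c) / c := (le_div_iff₀ hc).symm

theorem correlated_saddle_point_small_n_general (hc : 0 < c) (hd : 0 < regretCoupling u c n) :
    (∀ P, searchRegret u c n (equalizingSearchProb u c n) P = equalizedRegret u c n) ∧
    (∀ α, searchRegret u c n α (equalizingTreasureProb u c n) = equalizedRegret u c n) ∧
    (equalizingTreasureProb u c n ≤ 1 ↔ n ≤ (2 * u - c) / c) :=
  ⟨searchRegret_equalizingSearchProb hd.ne', searchRegret_equalizingTreasureProb hd.ne',
    equalizingTreasureProb_le_one_iff hc hd⟩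

end Order

/-- Correlated-rewards case, small `n`: with
`R^c_n(α,P) = (1-α)P(ū-c) + α(P(n-1)/2 + (1-P)n)c`,
`α_n^c = (ū-c)/(ū-c+(n+1)c/2)`, `P_n^* = nc/(ū+(n-1)c/2)` and
`R_n^{c*} = nc(ū-c)/(ū-c+(n+1)c/2)`:
(i) `R^c_n(α_n^c, P) = R_n^{c*}` for all `P ∈ [0,1]`;
(ii) `R^c_n(α, P_n^*) = R_n^{c*}` for all `α ∈ [0,1]`;
(iii) `P_n^* ≤ 1 ↔ n ≤ (2ū-c)/c`.
Hence for `n ≤ (2ū-c)/c` the pair `(α_n^c, P_n^*)` is a saddle point with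
value `R_n^{c*}`. -/
theorem correlated_saddle_point_small_n (ubar c : ℝ) (hc : 0 < c) (hcu : c < ubar)
    (n : ℕ) (hn : 1 ≤ n)
    (Rc : ℝ → ℝ → ℝ)
    (hRc : ∀ α P, Rc α P =
      (1 - α) * P * (ubar - c) + α * (P * ((n : ℝ) - 1) / 2 + (1 - P) * (n : ℝ)) * c) :
    (∀ P ∈ Set.Icc (0:ℝ) 1,
      Rc ((ubar - c) / (ubar - c + ((n : ℝ) + 1) * c / 2)) P =
        (n : ℝ) * c * (ubar - c) / (ubar - c + ((n : ℝ) + 1) * c / 2)) ∧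
    (∀ α ∈ Set.Icc (0:ℝ) 1,
      Rc α ((n : ℝ) * c / (ubar + ((n : ℝ) - 1) * c / 2)) =
        (n : ℝ) * c * (ubar - c) / (ubar - c + ((n : ℝ) + 1) * c / 2)) ∧
    ((n : ℝ) * c / (ubar + ((n : ℝ) - 1) * c / 2) ≤ 1 ↔ (n : ℝ) ≤ (2 * ubar - c) / c) := by
  obtain ⟨hα, hP, hle⟩ :=
    correlated_saddle_point_small_n_general hc (regretCoupling_pos hc hcu n.cast_nonneg)
  exact ⟨fun P _ ↦ (hRc _ P).trans (hα P), fun α _ ↦ (hRc α _).trans (hP α), hle⟩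
end

section
/- Define recursively R̃_1 := c·(ū−c)/ū and, for integers n ≥ 2, R̃_n := n·(ū−c)·(c + R̃_{n−1}) / (n·(ū−c) + c + R̃_{n−1}); define α̃_n := n·(ū−c)/(n·(ū−c) + c + R̃_{n−1}) and P̃_n := n·(c + R̃_{n−1})/(n·(ū−c) + c + R̃_{n−1}); and define the stage regret T_n(α, P) := (1−α)·P·(ū−c) + α·(1 − P/n)·(c + R̃_{n−1}). Then every R̃_n is strictly positive, and for every n ≥ 2: (i) T_n(α̃_n, P) = R̃_n for all P ∈ [0,1]; (ii) T_n(α, P̃_n) = R̃_n for all α ∈ [0,1]; and (iii) P̃_n ≤ 1 if and only if (n−1)·(c + R̃_{n−1}) ≤ n·(ū−c). -/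
/-!
Write `d = ū - c` for the regret from wrongly opting out and `s = c + R̃_{n-1}` for the regret from
opening a wrong box. The stage regret is affine in each of `α` and `P` separately. The probability
`α̃_n` is the one at which its slope in `P` vanishes, so that Nature is indifferent, and `P̃_n` is
the one at which its slope in `α` vanishes, so that the decision-maker is. Each constant value is
`n d s / (n d + s)`, the next term of the recursion.
-/

section Algebra

variable {K : Type*} [Field K]

/-- The regret of a decision-maker who opens a uniformly random one of `n` boxes with probability
`α` and opts out otherwise, when Nature hides a reward in one random box with probability `P`. The
regret is `d` after opting out although there is a reward and `s` after opening a wrong box. The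
number of boxes is an element of the field to avoid casts. -/
def stageRegret (n d s α P : K) : K :=
  (1 - α) * P * d + α * (1 - P / n) * s

/-- The constant that `stageRegret` equals as soon as either player is made indifferent; `R̃` is its
iterate. If `n * d + s = 0`, it is `0` by the convention for division and has no meaning. -/
def stageValue (n d s : K) : K :=
  n * d * s / (n * d + s)

/-- The probability `α̃` of opening a box that makes Nature indifferent in the stage game. -/
def equalizingOpenProb (n d s : K) : K :=
  n * d / (n * d + s)

/-- The probability `P̃` of a reward that makes the decision-maker indifferent in the stage game. It
may exceed `1`, in which case Nature cannot implement it. -/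
def equalizingRewardProb (n d s : K) : K :=
  n * s / (n * d + s)

variable {n d s : K}

theorem stageRegret_eq_of_nature_indifferent {α : K} (h : (1 - α) * d = α * s / n) (P : K) :
    stageRegret n d s α P = α * s := by
  unfold stageRegret
  linear_combination P * h

theorem stageRegret_eq_of_decisionMaker_indifferent {P : K} (h : P * d = (1 - P / n) * s) (α : K) :
    stageRegret n d s α P = P * d := by
  unfold stageRegret
  linear_combination -α * h

theorem one_sub_equalizingOpenProb_mul (hn : n ≠ 0) (hds : n * d + s ≠ 0) :
    (1 - equalizingOpenProb n d s) * d = equalizingOpenProb n d s * s / n := by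
  unfold equalizingOpenProb
  field_simp
  ring

theorem equalizingRewardProb_mul (hn : n ≠ 0) (hds : n * d + s ≠ 0) :
    equalizingRewardProb n d s * d = (1 - equalizingRewardProb n d s / n) * s := by
  unfold equalizingRewardProb
  field_simp
  ring

theorem stageRegret_equalizingOpenProb (hn : n ≠ 0) (hds : n * d + s ≠ 0) (P : K) :
    stageRegret n d s (equalizingOpenProb n d s) P = stageValue n d s :=
  calc
    stageRegret n d s (equalizingOpenProb n d s) P = equalizingOpenProb n d s * s :=
      stageRegret_eq_of_nature_indifferent (one_sub_equalizingOpenProb_mul hn hds) P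
    _ = stageValue n d s := div_mul_eq_mul_div _ _ _

theorem stageRegret_equalizingRewardProb (hn : n ≠ 0) (hds : n * d + s ≠ 0) (α : K) :
    stageRegret n d s α (equalizingRewardProb n d s) = stageValue n d s :=
  calc
    stageRegret n d s α (equalizingRewardProb n d s) = equalizingRewardProb n d s * d :=
      stageRegret_eq_of_decisionMaker_indifferent (equalizingRewardProb_mul hn hds) α
    _ = stageValue n d s := by
      rw [equalizingRewardProb, stageValue, div_mul_eq_mul_div, mul_right_comm]

end Algebra

section Order

variable {K : Type*} [Field K] [LinearOrder K] [IsStrictOrderedRing K]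

theorem stageValue_pos {n d s : K} (hn : 0 < n) (hd : 0 < d) (hs : 0 < s) :
    0 < stageValue n d s := by
  unfold stageValue
  positivity

theorem equalizingRewardProb_le_one_iff {n d s : K} (hds : 0 < n * d + s) :
    equalizingRewardProb n d s ≤ 1 ↔ (n - 1) * s ≤ n * d := by
  rw [equalizingRewardProb, div_le_one hds, sub_one_mul, sub_le_iff_le_add]

theorem pos_of_stageValue_recursion {d c : K} (hd : 0 < d) (hc : 0 ≤ c) {R : ℕ → K}
    (hR_one : 0 < R 1)
    (hR : ∀ n : ℕ, 2 ≤ n → R n = stageValue (n : K) d (c + R (n - 1))) (n : ℕ) (hn : 1 ≤ n) :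
    0 < R n := by
  induction n, hn using Nat.le_induction with
  | base => exact hR_one
  | succ k hk ih =>
    rw [hR (k + 1) (Nat.succ_le_succ hk), Nat.add_sub_cancel]
    exact stageValue_pos (Nat.cast_pos.mpr k.succ_pos) hd (add_pos_of_nonneg_of_pos hc ih)

theorem intrapersonal_equilibrium_correlated_general {ubar c : K} (hc : 0 < c) (hcu : c < ubar)
    {R : ℕ → K} (hR_one : R 1 = c * (ubar - c) / ubar)
    (hR : ∀ n : ℕ, 2 ≤ n → R n = stageValue (n : K) (ubar - c) (c + R (n - 1))) :
    (∀ n : ℕ, 1 ≤ n → 0 < R n) ∧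
    ∀ n : ℕ, 2 ≤ n →
      (∀ P : K, stageRegret (n : K) (ubar - c) (c + R (n - 1))
        (equalizingOpenProb (n : K) (ubar - c) (c + R (n - 1))) P = R n) ∧
      (∀ α : K, stageRegret (n : K) (ubar - c) (c + R (n - 1)) α
        (equalizingRewardProb (n : K) (ubar - c) (c + R (n - 1))) = R n) ∧
      (equalizingRewardProb (n : K) (ubar - c) (c + R (n - 1)) ≤ 1 ↔
        ((n : K) - 1) * (c + R (n - 1)) ≤ (n : K) * (ubar - c)) := by
  have hd : 0 < ubar - c := sub_pos.mpr hcu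
  have hR_one_pos : 0 < R 1 := hR_one ▸ div_pos (mul_pos hc hd) (hc.trans hcu)
  have hR_pos := pos_of_stageValue_recursion hd hc.le hR_one_pos hR
  refine ⟨hR_pos, fun n hn => ?_⟩
  have hn_pos : (0 : K) < n := Nat.cast_pos.mpr (zero_lt_two.trans_le hn)
  have hs : 0 < c + R (n - 1) := add_pos hc (hR_pos (n - 1) (Nat.le_sub_one_of_lt hn))
  have hds : 0 < (n : K) * (ubar - c) + (c + R (n - 1)) := add_pos (mul_pos hn_pos hd) hs
  rw [hR n hn]
  exact ⟨stageRegret_equalizingOpenProb hn_pos.ne' hds.ne',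
    stageRegret_equalizingRewardProb hn_pos.ne' hds.ne', equalizingRewardProb_le_one_iff hds⟩

end Order

/-- Intrapersonal equilibrium with arbitrarily correlated binary rewards
(Proposition 1): with `R̃_1 = c(ū-c)/ū`,
`R̃_n = n(ū-c)(c+R̃_{n-1})/(n(ū-c)+c+R̃_{n-1})`,
`α̃_n = n(ū-c)/(n(ū-c)+c+R̃_{n-1})`, `P̃_n = n(c+R̃_{n-1})/(n(ū-c)+c+R̃_{n-1})`,
and stage regret `T_n(α,P) = (1-α)P(ū-c) + α(1-P/n)(c+R̃_{n-1})`: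
every `R̃_n` (for `n ≥ 1`) is strictly positive, and for every `n ≥ 2`:
(i) `T_n(α̃_n, P) = R̃_n` for all `P ∈ [0,1]`;
(ii) `T_n(α, P̃_n) = R̃_n` for all `α ∈ [0,1]`;
(iii) `P̃_n ≤ 1 ↔ (n-1)(c+R̃_{n-1}) ≤ n(ū-c)`. -/
theorem intrapersonal_equilibrium_correlated (ubar c : ℝ) (hc : 0 < c) (hcu : c < ubar)
    (Rt : ℕ → ℝ)
    (hR1 : Rt 1 = c * (ubar - c) / ubar)
    (hRn : ∀ n : ℕ, 2 ≤ n →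
      Rt n = (n : ℝ) * (ubar - c) * (c + Rt (n - 1)) /
        ((n : ℝ) * (ubar - c) + (c + Rt (n - 1))))
    (αt Pt : ℕ → ℝ)
    (hαt : ∀ n : ℕ, 2 ≤ n →
      αt n = (n : ℝ) * (ubar - c) / ((n : ℝ) * (ubar - c) + (c + Rt (n - 1))))
    (hPt : ∀ n : ℕ, 2 ≤ n →
      Pt n = (n : ℝ) * (c + Rt (n - 1)) / ((n : ℝ) * (ubar - c) + (c + Rt (n - 1))))
    (T : ℕ → ℝ → ℝ → ℝ)
    (hT : ∀ (n : ℕ) (α P : ℝ),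
      T n α P = (1 - α) * P * (ubar - c) + α * (1 - P / (n : ℝ)) * (c + Rt (n - 1))) :
    (∀ n : ℕ, 1 ≤ n → 0 < Rt n) ∧
    ∀ n : ℕ, 2 ≤ n →
      (∀ P ∈ Set.Icc (0:ℝ) 1, T n (αt n) P = Rt n) ∧
      (∀ α ∈ Set.Icc (0:ℝ) 1, T n α (Pt n) = Rt n) ∧
      (Pt n ≤ 1 ↔ ((n : ℝ) - 1) * (c + Rt (n - 1)) ≤ (n : ℝ) * (ubar - c)) := by
  obtain ⟨hR_pos, hstage⟩ := intrapersonal_equilibrium_correlated_general hc hcu hR1 hRn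
  refine ⟨hR_pos, fun n hn => ?_⟩
  obtain ⟨hNature, hDecisionMaker, hle⟩ := hstage n hn
  simp only [hT, hαt n hn, hPt n hn]
  exact ⟨fun P _ => hNature P, fun α _ => hDecisionMaker α, hle⟩
end

section
/- Let N be a finite set of positive integers and, for each i ∈ N, let ū_i > c_i > 0 be reals; set p̂_i := c_i/ū_i ∈ (0,1) and Δ_i := ū_i − c_i, and assume Δ_i ≤ Δ_k whenever i < k in N. For k and a finite set M define ψ(k, M) := ∏_{j ∈ M, j > k} (1 − p̂_j), and define R*(M) := Σ_{k ∈ M} p̂_k · Δ_k · ψ(k, M). Then for every i ∈ N: p̂_i · Σ_{k ∈ N, k > i} p̂_k · ψ(k, N) · (Δ_k − Δ_i) + (1 − p̂_i) · (c_i + R*(N \ {i})) = R*(N). That is, at the beliefs p̂ = (p̂_i), the regret from opening any box i ∈ N first (and continuing optimally) equals the regret R*(N) from opting out, so the decision-maker is indifferent among all search strategies. -/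
/-- `ψ(k, M) = ∏_{j ∈ M, j > k} (1 - p̂_j)`: under beliefs `p̂`, the probability
that all boxes in `M` with index above `k` fail. -/
noncomputable def psiProd (phat : ℕ → ℝ) (k : ℕ) (M : Finset ℕ) : ℝ :=
  ∏ j ∈ M.filter (fun j => k < j), (1 - phat j)

/-- `R*(M) = Σ_{k ∈ M} p̂_k Δ_k ψ(k, M)`: the saddle-point regret of the
heterogeneous problem on the menu `M`. -/
noncomputable def hetRegret (phat Δ : ℕ → ℝ) (M : Finset ℕ) : ℝ :=
  ∑ k ∈ M, phat k * Δ k * psiProd phat k M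

/-!
When the boxes succeed independently with probabilities `pₖ`, the number `pₖ ψ(k, N)` is the
probability that `k` is the highest success, so the sum of `pₖ ψ(k, N)` over `k > i` telescopes to
`1 - ψ(i, N)`. Removing box `i` from the menu drops the factor `1 - pᵢ` from `ψ(k, N)` for `k < i`
and leaves `ψ(k, N)` unchanged for `k > i`, which expresses `R*(N)` through `R*(N \ {i})`. The
terms that remain cancel by the break-even condition `pᵢ ūᵢ = cᵢ`, where `ūᵢ = Δᵢ + cᵢ`.
-/

theorem sum_mul_prod_one_sub_filter_lt {ι R : Type*} [LinearOrder ι] [CommRing R]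
    (s : Finset ι) (p : ι → R) :
    ∑ k ∈ s, p k * ∏ j ∈ s with k < j, (1 - p j) = 1 - ∏ j ∈ s, (1 - p j) := by
  have h := s.prod_add_ordered (fun j => 1 - p j) p
  simp only [sub_add_cancel, Finset.prod_const_one, mul_one] at h
  exact eq_sub_of_add_eq' h.symm

section Regret

variable {M N : Finset ℕ} {i k : ℕ} (p Δ : ℕ → ℝ)

theorem psiProd_congr (h : ∀ j, k < j → (j ∈ M ↔ j ∈ N)) : psiProd p k M = psiProd p k N := by
  unfold psiProd
  congr 1
  ext j
  simpa only [Finset.mem_filter, and_congr_left_iff] using h j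

theorem psiProd_sdiff_singleton_of_le (hik : i ≤ k) :
    psiProd p k (N \ {i}) = psiProd p k N :=
  psiProd_congr p fun j hkj => by
    simp only [Finset.mem_sdiff, Finset.mem_singleton, (hik.trans_lt hkj).ne', not_false_eq_true,
      and_true]

theorem one_sub_mul_psiProd_sdiff_singleton_of_lt (hi : i ∈ N) (hki : k < i) :
    (1 - p i) * psiProd p k (N \ {i}) = psiProd p k N := by
  unfold psiProd
  rw [Finset.sdiff_singleton_eq_erase, Finset.filter_erase]
  exact Finset.mul_prod_erase _ (fun j => 1 - p j) (Finset.mem_filter.mpr ⟨hi, hki⟩)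

variable (N i) in
theorem sum_filter_lt_mul_psiProd :
    ∑ k ∈ N with i < k, p k * psiProd p k N = 1 - psiProd p i N := by
  calc ∑ k ∈ N with i < k, p k * psiProd p k N
      = ∑ k ∈ N with i < k, p k * psiProd p k {j ∈ N | i < j} := by
        refine Finset.sum_congr rfl fun k hk => ?_
        have hik : i < k := (Finset.mem_filter.mp hk).2
        rw [psiProd_congr p fun j hkj => ?_]
        simp only [Finset.mem_filter, hik.trans hkj, and_true]
    _ = 1 - psiProd p i N := sum_mul_prod_one_sub_filter_lt _ p

theorem hetRegret_eq_add_hetRegret_sdiff_singleton (hi : i ∈ N) :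
    hetRegret p Δ N = p i * Δ i * psiProd p i N
      + p i * ∑ k ∈ N with i < k, p k * Δ k * psiProd p k N
      + (1 - p i) * hetRegret p Δ (N \ {i}) := by
  have hfilter : {k ∈ N | i < k} = {k ∈ N \ {i} | i < k} := by
    rw [Finset.sdiff_singleton_eq_erase, Finset.filter_erase, Finset.erase_eq_of_notMem (by simp)]
  unfold hetRegret
  rw [hfilter, Finset.sum_filter, Finset.sum_eq_add_sum_sdiff_singleton_of_mem hi, add_assoc,
    Finset.mul_sum, Finset.mul_sum, ← Finset.sum_add_distrib]
  congr 1
  refine Finset.sum_congr rfl fun k hk => ?_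
  have hki : k ≠ i := (Finset.mem_sdiff.mp hk).2 ∘ Finset.mem_singleton.mpr
  rcases hki.lt_or_gt with hlt | hgt
  · rw [if_neg hlt.not_gt, ← one_sub_mul_psiProd_sdiff_singleton_of_lt p hi hlt]
    ring
  · rw [if_pos hgt, psiProd_sdiff_singleton_of_le p hgt.le]
    ring

theorem heterogeneous_indifference_general {c : ℝ} (hi : i ∈ N) (hc : p i * (Δ i + c) = c) :
    p i * (∑ k ∈ N with i < k, p k * psiProd p k N * (Δ k - Δ i))
      + (1 - p i) * (c + hetRegret p Δ (N \ {i})) = hetRegret p Δ N := by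
  have hsum : ∑ k ∈ N with i < k, p k * psiProd p k N * (Δ k - Δ i)
      = ∑ k ∈ N with i < k, p k * Δ k * psiProd p k N - Δ i * (1 - psiProd p i N) := by
    rw [← sum_filter_lt_mul_psiProd, Finset.mul_sum, ← Finset.sum_sub_distrib]
    exact Finset.sum_congr rfl fun k _ => by ring
  rw [hsum, hetRegret_eq_add_hetRegret_sdiff_singleton p Δ hi]
  linear_combination -hc

end Regret

/-- Heterogeneous Pandora problem (Theorem 6 indifference condition): with
`p̂_i = c_i/ū_i`, `Δ_i = ū_i - c_i` nondecreasing in the index, for every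
`i ∈ N`:
`p̂_i Σ_{k ∈ N, k > i} p̂_k ψ(k,N)(Δ_k - Δ_i) + (1-p̂_i)(c_i + R*(N\{i})) = R*(N)`,
so at the beliefs `p̂` the regret of opening any box `i` first equals the
regret `R*(N)` of opting out. -/
theorem heterogeneous_indifference (N : Finset ℕ) (ubar cbar : ℕ → ℝ)
    (hidx : ∀ i ∈ N, 0 < i)
    (hc : ∀ i ∈ N, 0 < cbar i)
    (hcu : ∀ i ∈ N, cbar i < ubar i)
    (hord : ∀ i ∈ N, ∀ k ∈ N, i < k → ubar i - cbar i ≤ ubar k - cbar k) :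
    ∀ i ∈ N,
      (cbar i / ubar i) *
          (∑ k ∈ N.filter (fun k => i < k),
            (cbar k / ubar k) * psiProd (fun j => cbar j / ubar j) k N *
              ((ubar k - cbar k) - (ubar i - cbar i)))
        + (1 - cbar i / ubar i) *
          (cbar i +
            hetRegret (fun j => cbar j / ubar j) (fun j => ubar j - cbar j) (N \ {i}))
      = hetRegret (fun j => cbar j / ubar j) (fun j => ubar j - cbar j) N := by
  intro i hi
  have hu : ubar i ≠ 0 := ((hc i hi).trans (hcu i hi)).ne'
  exact heterogeneous_indifference_general (fun j => cbar j / ubar j) (fun j => ubar j - cbar j) hi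
    (by rw [sub_add_cancel, div_mul_cancel₀ _ hu])
end
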